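/- For all integers d ≥ 1 and p ≥ 2, the coefficients a_n of φ_{d,p} satisfy a_n ≥ (d−1) · a_{n−(p−1)} for every n ≥ p; consequently a_n ≥ 0 for all n ≥ 0 (the power series φ_{d,p} has nonnegative coefficients). -/

import Mathlib

lemma alt_sum (N : ℕ) : ∀ (f : ℕ → ℚ), (∀ i, 0 ≤ f i) → (∀ i, f (i+1) ≤ f i) →
    0 ≤ ∑ i ∈ Finset.range N, (-1)^i * f i ∧ ∑ i ∈ Finset.range N, (-1)^i * f i ≤ f 0 := by
  induction N with
  | zero => intro f h0 _; simpa using h0 0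
  | succ N ih =>
    intro f h0 h1
    obtain ⟨h2, h3⟩ := ih (fun i => f (i+1)) (fun i => h0 _) (fun i => h1 _)
    have h4 := h1 0
    have e : ∑ i ∈ Finset.range (N+1), (-1)^i * f i
        = f 0 - ∑ i ∈ Finset.range N, (-1)^i * f (i+1) := by
      rw [Finset.sum_range_succ', sub_eq_add_neg, ← Finset.sum_neg_distrib, add_comm]
      congr 1
      · simp
      · apply Finset.sum_congr rfl
        intro i _
        ring
    simp only [zero_add] at *
    rw [e]
    constructor <;> linarith

lemma main_rec (e q p : ℕ) (hp : p = q + 1) (hq : 1 ≤ q) (a : ℕ → ℚ) (h0 : a 0 = 1)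
    (hrec : ∀ n, 1 ≤ n → ∑ k ∈ Finset.range (e + 1 + 1),
      (-1 : ℚ) ^ k * (((e+1).choose k : ℚ) * if p ^ k - 1 ≤ n then a (n - (p ^ k - 1)) else 0) = 0) :
    ∀ n, 0 ≤ a n ∧ (q ≤ n → (e : ℚ) * a (n - q) ≤ a n) := by
  intro n
  induction n using Nat.strong_induction_on with
  | _ n ih =>
  rcases Nat.eq_zero_or_pos n with rfl | hn
  · refine ⟨by rw [h0]; norm_num, fun h => by omega⟩
  have hit : ∀ r m, m < n → r * q ≤ m → (e : ℚ)^r * a (m - r * q) ≤ a m := by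
    intro r
    induction r with
    | zero => intro m _ _; simp
    | succ r ihr =>
      intro m hm hr
      have hs : (r+1)*q = r*q+q := by ring
      have h1 := ihr m hm (by omega)
      have h2 := (ih (m - r*q) (by omega)).2 (by omega)
      have h3 : m - r*q - q = m - (r+1)*q := by omega
      rw [h3] at h2
      calc (e:ℚ)^(r+1) * a (m - (r+1)*q) = e^r * (e * a (m - (r+1)*q)) := by ring
        _ ≤ e^r * a (m - r*q) := by gcongr
        _ ≤ _ := h1
  have hpk : ∀ k, 1 ≤ p^k := fun k => Nat.one_le_pow _ _ (by omega)
  have hps : ∀ k, p^(k+1) = p^k + p^k * q := fun k => by rw [pow_succ, hp]; ring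
  obtain ⟨t, ht⟩ : ∃ t : ℕ → ℚ, t = fun k => ((e+1).choose k : ℚ) *
    if p ^ k - 1 ≤ n then a (n - (p ^ k - 1)) else 0 := ⟨_, rfl⟩
  have hpk1 : ∀ k, q ≤ p^(k+1) - 1 := by
    intro k
    have := hps k
    have := hpk k
    have := Nat.le_mul_of_pos_left q (hpk k)
    omega
  have tnn : ∀ k, 0 ≤ t (k+1) := by
    intro k
    simp only [ht]
    split_ifs
    · have := hpk1 k
      have := (ih (n - (p^(k+1)-1)) (by omega)).1
      positivity
    · simp
  have tanti : ∀ k, t (k+2) ≤ t (k+1) := by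
    intro k
    by_cases hc : p^(k+2) - 1 ≤ n
    swap
    · have : t (k+2) = 0 := by simp only [ht, if_neg hc, mul_zero]
      rw [this]; exact tnn k
    rcases Nat.eq_zero_or_pos e with he | he
    · have : t (k+2) = 0 := by
        simp only [ht, he]
        rw [Nat.choose_eq_zero_of_lt (by omega)]; simp
      rw [this]; exact tnn k
    have e1 : p^(k+2) = p^(k+1) + p^(k+1) * q := hps (k+1)
    have e2 := hpk (k+1)
    have e3 := hpk1 k
    have hc' : p^(k+1) - 1 ≤ n := by omega
    have h1 := hit (p^(k+1)) (n - (p^(k+1)-1)) (by omega) (by omega)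
    have h2 : n - (p^(k+1)-1) - p^(k+1)*q = n - (p^(k+2)-1) := by
      have : p^(k+2) = p^(k+1+1) := rfl
      omega
    rw [h2] at h1
    have h3 := (ih (n - (p^(k+2)-1)) (by have := hpk1 (k+1); have : p^(k+2) = p^(k+1+1) := rfl; omega)).1
    have h4 : (e:ℚ) ≤ (e:ℚ)^(p^(k+1)) := le_self_pow₀ (by exact_mod_cast he) (by omega)
    have h5 : ((e+1).choose (k+2) : ℚ) ≤ (e+1).choose (k+1) * e := by
      have := Nat.choose_succ_right_eq (e+1) (k+1)
      have h6 : (e+1).choose (k+2) ≤ (e+1).choose (k+1) * e := by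
        calc (e+1).choose (k+2) ≤ (e+1).choose (k+2) * (k+1+1) := Nat.le_mul_of_pos_right _ (by omega)
          _ = (e+1).choose (k+1) * (e+1-(k+1)) := this
          _ ≤ _ := Nat.mul_le_mul_left _ (by omega)
      exact_mod_cast h6
    simp only [ht, if_pos hc, if_pos hc']
    calc _ ≤ ((e+1).choose (k+1) * e : ℚ) * a (n - (p^(k+2)-1)) := by gcongr
      _ = (e+1).choose (k+1) * (e * a (n - (p^(k+2)-1))) := by ring
      _ ≤ (e+1).choose (k+1) * (e^(p^(k+1)) * a (n - (p^(k+2)-1))) := by gcongr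
      _ ≤ _ := by gcongr
  have hr := hrec n hn
  have hr' : ∑ k ∈ Finset.range (e + 1 + 1), (-1 : ℚ) ^ k * t k = 0 := by rw [ht]; exact hr
  have ht0 : t 0 = a n := by simp [ht]
  rcases lt_or_ge n q with hnq | hnq
  · have hz : ∀ k, t (k+1) = 0 := by
      intro k
      have := hpk1 k
      simp only [ht]
      rw [if_neg (by omega), mul_zero]
    rw [Finset.sum_range_succ'] at hr'
    simp [hz, ht0] at hr'
    exact ⟨hr'.ge, fun h => by omega⟩
  have hb := (ih (n - q) (by omega)).1
  have ht1 : t 1 = (e+1) * a (n - q) := by simp [ht, hp, hnq]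
  have ht2 : t 2 ≤ a (n - q) := by
    rcases Nat.eq_zero_or_pos e with he | he
    · have : t 2 = 0 := by simp [ht, he]
      rw [this]; exact hb
    by_cases hc : p^2 - 1 ≤ n
    swap
    · have : t 2 = 0 := by simp only [ht, if_neg hc, mul_zero]
      rw [this]; exact hb
    have e1 := hps 1
    rw [pow_one] at e1
    norm_num at e1
    have h1 := hit p (n - q) (by omega) (by omega)
    have h2 : n - q - p*q = n - (p^2-1) := by omega
    rw [h2] at h1
    have h3 := (ih (n - (p^2-1)) (by omega)).1
    have he' : (1:ℚ) ≤ e := by exact_mod_cast he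
    have h4 : (e:ℚ)^2 ≤ (e:ℚ)^p := pow_le_pow_right₀ he' (by omega)
    have h5 : ((e+1).choose 2 : ℚ) ≤ e^2 := by
      rw [Nat.cast_choose_two]; push_cast; nlinarith
    simp only [ht, if_pos hc]
    calc _ ≤ (e:ℚ)^p * a (n - (p^2-1)) := by gcongr; exact h5.trans h4
      _ ≤ _ := h1
  rw [Finset.sum_range_succ', Finset.sum_range_succ'] at hr'
  have hs := (alt_sum e (fun k => t (k+2)) (fun k => tnn (k+1)) (fun k => tanti (k+1))).2
  have hs' : ∑ k ∈ Finset.range e, (-1:ℚ)^(k+1+1) * t (k+1+1)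
      = ∑ k ∈ Finset.range e, (-1:ℚ)^k * t (k+2) :=
    Finset.sum_congr rfl fun k _ => by rw [show k+1+1 = k+2 from rfl]; ring
  rw [hs'] at hr'
  simp only [zero_add, pow_one, pow_zero, one_mul, ht0, ht1] at hr' hs
  have hf : (e : ℚ) * a (n - q) ≤ a n := by linarith
  exact ⟨le_trans (by positivity) hf, fun _ => hf⟩


/-- For `d ≥ 1`, `p ≥ 2`, let `P(z) = ∑_{k=0}^{d} (-1)^k C(d,k) z^{p^k - 1}`
in `ℚ⟦z⟧` (which has constant term `1`, hence is invertible), let `φ_{d,p}` be its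
multiplicative inverse, and let `a_n` be the coefficient of `z^n` in `φ_{d,p}`.  Then
`a_n ≥ (d-1) ⬝ a_{n-(p-1)}` for every `n ≥ p`; consequently `a_n ≥ 0` for all `n ≥ 0`. -/
theorem statement_11 (d p : ℕ) (hd : 1 ≤ d) (hp : 2 ≤ p)
    (P φ : PowerSeries ℚ)
    (hP : P = ∑ k ∈ Finset.range (d + 1),
        (-1 : PowerSeries ℚ) ^ k * (d.choose k : PowerSeries ℚ) * PowerSeries.X ^ (p ^ k - 1))
    (hφ : P * φ = 1) :
    (∀ n : ℕ, p ≤ n →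
      ((d : ℚ) - 1) * PowerSeries.coeff (n - (p - 1)) φ ≤ PowerSeries.coeff n φ) ∧
    (∀ n : ℕ, 0 ≤ PowerSeries.coeff n φ) := by
  obtain ⟨e, rfl⟩ : ∃ e, d = e + 1 := ⟨d - 1, by omega⟩
  have hco : ∀ n, ∑ k ∈ Finset.range (e + 1 + 1),
      (-1 : ℚ) ^ k * (((e+1).choose k : ℚ) * if p ^ k - 1 ≤ n then
        PowerSeries.coeff (n - (p ^ k - 1)) φ else 0) = if n = 0 then 1 else 0 := by
    intro n
    rw [← PowerSeries.coeff_one, ← hφ, hP, Finset.sum_mul, map_sum]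
    apply Finset.sum_congr rfl
    intro k _
    have : (-1 : PowerSeries ℚ) ^ k * ((e+1).choose k : PowerSeries ℚ)
        = PowerSeries.C ((-1 : ℚ) ^ k * ((e+1).choose k : ℚ)) := by simp
    rw [this, mul_assoc, PowerSeries.coeff_C_mul, PowerSeries.coeff_X_pow_mul', mul_assoc]
  have h0 : PowerSeries.coeff 0 φ = 1 := by
    have h := congrArg (PowerSeries.coeff 0) hφ
    have h2 := hco 0
    rw [Finset.sum_range_succ', Finset.sum_eq_zero] at h2
    · simpa using h2
    · intro k _
      have : p ≤ p^(k+1) := Nat.le_self_pow (by omega) p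
      rw [if_neg (by omega)]; simp
  have key := main_rec e (p-1) p (by omega) (by omega) (fun n => PowerSeries.coeff n φ) h0
    (fun n hn => by rw [hco n, if_neg (by omega)])
  refine ⟨fun n hn => ?_, fun n => (key n).1⟩
  have := (key n).2 (by omega)
  push_cast
  simpa using this
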